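/- There exists a universal constant C > 0 (independent of d, σ, T, t, β and p₀) with the following property: for every d ≥ 1, σ > 0, T > 0, every continuous, positive, non-decreasing noise schedule β on [0,T], every t ∈ (0, T], and every probability density p₀ on ℝ^d, the forward marginal density p_t satisfies ∫_{ℝ^d} ‖ ∇²log p_t(x) + σ^{−2} I_d ‖_Fr⁴ p_t(x) dx ≤ C ( σ_t^{−8} + σ^{−8} ) ( ∫_{ℝ^d} ‖z‖⁸ dγ_d(z) + d⁴ ), where ∇²log p_t(x) denotes the Hessian matrix of log p_t at x, ‖·‖_Fr the Frobenius norm on ℝ^{d×d}, and γ_d = N(0, I_d) the standard Gaussian measure on ℝ^d. -/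

import Mathlib

open MeasureTheory Real Set
open scoped ENNReal

noncomputable section

/-- Density of the standard Gaussian `N(0, I_d)` on `ℝ^d`. -/
def stdGaussDensity (d : ℕ) (x : EuclideanSpace ℝ (Fin d)) : ℝ :=
  (2 * π) ^ (-(d : ℝ) / 2) * Real.exp (-‖x‖ ^ 2 / 2)

/-- The standard Gaussian measure `γ_d = N(0, I_d)` on `ℝ^d`. -/
def stdGaussMeasure (d : ℕ) : Measure (EuclideanSpace ℝ (Fin d)) :=
  volume.withDensity fun x => ENNReal.ofReal (stdGaussDensity d x)

/-- `m_t = exp(−(1/(2σ²)) ∫₀^t β(s) ds)` (here `σ2 = σ²`). -/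
def mcoef (σ2 : ℝ) (β : ℝ → ℝ) (t : ℝ) : ℝ :=
  Real.exp (-(1 / (2 * σ2)) * ∫ s in (0:ℝ)..t, β s)

/-- `σ_t = (σ²(1 − m_t²))^{1/2}` (here `σ2 = σ²`). -/
def scoef (σ2 : ℝ) (β : ℝ → ℝ) (t : ℝ) : ℝ :=
  Real.sqrt (σ2 * (1 - mcoef σ2 β t ^ 2))

/-- The forward marginal density at time `t` started from the density `p0`. -/
def forwardDensity (d : ℕ) (σ2 : ℝ) (β : ℝ → ℝ) (p0 : EuclideanSpace ℝ (Fin d) → ℝ)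
    (t : ℝ) (y : EuclideanSpace ℝ (Fin d)) : ℝ :=
  ∫ x, (2 * π * scoef σ2 β t ^ 2) ^ (-(d : ℝ) / 2) *
    Real.exp (-‖y - mcoef σ2 β t • x‖ ^ 2 / (2 * scoef σ2 β t ^ 2)) * p0 x

/-- The Hessian matrix of `f : ℝ^d → ℝ` at `x`. -/
def hessMatrix (d : ℕ) (f : EuclideanSpace ℝ (Fin d) → ℝ) (x : EuclideanSpace ℝ (Fin d)) :
    Matrix (Fin d) (Fin d) ℝ :=
  fun i j => fderiv ℝ (fun y => gradient f y i) x (EuclideanSpace.single j (1 : ℝ))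

/-- The Frobenius norm of a matrix. -/
def frobNorm (d : ℕ) (A : Matrix (Fin d) (Fin d) ℝ) : ℝ :=
  Real.sqrt (∑ i, ∑ j, A i j ^ 2)

/-- Unnormalised Gaussian kernel with prefactor `c`. -/
def gk {V : Type*} [NormedAddCommGroup V] (c s : ℝ) (u : V) : ℝ :=
  c * Real.exp (-‖u‖ ^ 2 / (2 * s ^ 2))

lemma gk_nonneg {V : Type*} [NormedAddCommGroup V] {c : ℝ} (hc : 0 < c) (s : ℝ) (u : V) :
    0 ≤ gk c s u := by unfold gk; positivity

lemma gk_pos {V : Type*} [NormedAddCommGroup V] {c : ℝ} (hc : 0 < c) (s : ℝ) (u : V) :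
    0 < gk c s u := by unfold gk; positivity

lemma gk_continuous {V : Type*} [NormedAddCommGroup V] (c s : ℝ) :
    Continuous (gk c s : V → ℝ) := by unfold gk; fun_prop

lemma gk_bound {V : Type*} [NormedAddCommGroup V] {c s : ℝ} (hc : 0 < c) (hs : 0 < s) (n : ℕ) :
    ∃ A : ℝ, ∀ u : V, ‖u‖ ^ n * gk c s u ≤ A := by
  refine ⟨c * (1 + (2 * s ^ 2) ^ n * n.factorial), fun u => ?_⟩
  have h0 : 0 ≤ ‖u‖ ^ 2 / (2 * s ^ 2) := by positivity
  have h1 := Real.pow_div_factorial_le_exp _ h0 n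
  have h2 : Real.exp (-‖u‖ ^ 2 / (2 * s ^ 2)) ≤ 1 := by
    rw [Real.exp_le_one_iff, neg_div]; linarith
  have h3 : ‖u‖ ^ n ≤ 1 + (‖u‖ ^ 2) ^ n := by
    rw [← pow_mul, mul_comm, pow_mul]
    nlinarith [sq_nonneg (‖u‖ ^ n - 1), pow_nonneg (norm_nonneg u) n]
  have h4 : (‖u‖ ^ 2) ^ n * Real.exp (-‖u‖ ^ 2 / (2 * s ^ 2)) ≤ (2 * s ^ 2) ^ n * n.factorial := by
    rw [neg_div, Real.exp_neg, ← div_eq_mul_inv, div_le_iff₀ (Real.exp_pos _)]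
    rw [div_pow, div_div, div_le_iff₀ (by positivity)] at h1
    linarith
  have h5 := Real.exp_pos (-‖u‖ ^ 2 / (2 * s ^ 2))
  unfold gk
  calc ‖u‖ ^ n * (c * Real.exp (-‖u‖ ^ 2 / (2 * s ^ 2)))
      = c * (‖u‖ ^ n * Real.exp (-‖u‖ ^ 2 / (2 * s ^ 2))) := by ring
    _ ≤ c * ((1 + (‖u‖ ^ 2) ^ n) * Real.exp (-‖u‖ ^ 2 / (2 * s ^ 2))) := by gcongr
    _ ≤ _ := by
      apply mul_le_mul_of_nonneg_left _ hc.le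
      linarith

lemma gk_hasFDerivAt {V : Type*} [NormedAddCommGroup V] [InnerProductSpace ℝ V]
    (c s : ℝ) (u : V) :
    HasFDerivAt (gk c s) ((-(1 / s ^ 2) * gk c s u) • innerSL ℝ u) u := by
  have h1 : HasFDerivAt (fun x : V => ‖x‖ ^ 2) (2 • (innerSL ℝ) u) u :=
    (hasStrictFDerivAt_norm_sq u).hasFDerivAt
  have h2 := ((h1.const_mul (-(1 / (2 * s ^ 2)))).exp).const_mul c
  have h3 : (gk c s : V → ℝ) = fun y => c * Real.exp (-(1 / (2 * s ^ 2)) * ‖y‖ ^ 2) := by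
    funext y; unfold gk; congr 2; ring
  rw [h3]
  refine h2.congr_fderiv ?_
  ext v
  simp
  ring

/-- Differentiation under the integral for a convolution-type integral. -/
lemma conv_hasFDerivAt {V : Type*} [NormedAddCommGroup V] [InnerProductSpace ℝ V]
    [FiniteDimensional ℝ V] [MeasurableSpace V] [BorelSpace V]
    (m : ℝ) {p0 : V → ℝ} (hp : Integrable p0) (f : V → ℝ) (f' : V → V →L[ℝ] ℝ)
    (hf : ∀ u, HasFDerivAt f (f' u) u) (hf' : Continuous f') {A B : ℝ}
    (hA : ∀ u, |f u| ≤ A) (hB : ∀ u, ‖f' u‖ ≤ B) (y : V) :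
    ∃ L : V →L[ℝ] ℝ, HasFDerivAt (fun y => ∫ x, f (y - m • x) * p0 x) L y ∧
      ∀ v, L v = ∫ x, f' (y - m • x) v * p0 x := by
  have hfc : Continuous f := continuous_iff_continuousAt.2 fun u => (hf u).continuousAt
  have hbd : Integrable (fun x => B * |p0 x|) := hp.abs.const_mul B
  have hms : AEStronglyMeasurable (fun x => p0 x • f' (y - m • x)) volume := by
    apply hp.aestronglyMeasurable.smul
    exact (hf'.comp (by fun_prop)).aestronglyMeasurable
  have hle : ∀ z x, ‖p0 x • f' (z - m • x)‖ ≤ B * |p0 x| := by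
    intro z x
    rw [norm_smul, mul_comm, Real.norm_eq_abs]
    exact mul_le_mul_of_nonneg_right (hB _) (abs_nonneg _)
  refine ⟨∫ x, p0 x • f' (y - m • x), ?_, ?_⟩
  · refine hasFDerivAt_integral_of_dominated_of_fderiv_le (s := univ)
      (F := fun y x => f (y - m • x) * p0 x) (F' := fun y x => p0 x • f' (y - m • x))
      (bound := fun x => B * |p0 x|)
      Filter.univ_mem ?_ ?_ hms ?_ hbd ?_
    · refine Filter.Eventually.of_forall fun z => ?_
      exact (hfc.comp (by fun_prop : Continuous fun x : V => z - m • x)).aestronglyMeasurable.mul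
        hp.aestronglyMeasurable
    · refine hp.bdd_mul (c := A)
        (hfc.comp (by fun_prop : Continuous fun x : V => y - m • x)).aestronglyMeasurable ?_
      exact Filter.Eventually.of_forall fun x => hA _
    · exact Filter.Eventually.of_forall fun x z _ => hle z x
    · refine Filter.Eventually.of_forall fun x z _ => ?_
      have h1 : HasFDerivAt (fun z => z - m • x) (ContinuousLinearMap.id ℝ V) z :=
        (hasFDerivAt_id z).sub_const _
      have h2 := ((hf (z - m • x)).comp z h1).mul_const (p0 x)
      simpa using h2
  · intro v
    rw [ContinuousLinearMap.integral_apply]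
    · congr 1; funext x; simp [mul_comm]
    · exact hbd.mono' hms (Filter.Eventually.of_forall fun x => hle y x)

lemma cs_integral {V : Type*} [MeasurableSpace V] {μ : Measure V} {w g : V → ℝ}
    (hw : ∀ x, 0 ≤ w x) (hwi : Integrable w μ) (h1 : Integrable (fun x => g x * w x) μ)
    (h2 : Integrable (fun x => g x ^ 2 * w x) μ) (hp : 0 < ∫ x, w x ∂μ) :
    (∫ x, g x * w x ∂μ) ^ 2 ≤ (∫ x, w x ∂μ) * ∫ x, g x ^ 2 * w x ∂μ := by
  set p := ∫ x, w x ∂μ with hpd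
  set M := ∫ x, g x * w x ∂μ with hM
  have h0 : 0 ≤ ∫ x, (g x * p - M) ^ 2 * w x ∂μ :=
    integral_nonneg fun x => mul_nonneg (sq_nonneg _) (hw x)
  have h3 : ∀ a b : ℝ, ∫ x, (g x * a - b) ^ 2 * w x ∂μ
      = a ^ 2 * (∫ x, g x ^ 2 * w x ∂μ) - 2 * a * b * (∫ x, g x * w x ∂μ)
        + b ^ 2 * ∫ x, w x ∂μ := by
    intro a b
    have h5 : Integrable (fun x => a ^ 2 * (g x ^ 2 * w x) - 2 * a * b * (g x * w x)) μ :=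
      (h2.const_mul _).sub (h1.const_mul _)
    rw [← integral_const_mul, ← integral_const_mul, ← integral_const_mul,
      ← integral_sub (h2.const_mul _) (h1.const_mul _), ← integral_add h5 (hwi.const_mul _)]
    congr 1; funext x; ring
  rw [h3, ← hM, ← hpd] at h0
  have h4 : 0 ≤ p * (p * (∫ x, g x ^ 2 * w x ∂μ) - M ^ 2) := by linarith
  have := nonneg_of_mul_nonneg_right h4 hp
  linarith

lemma gradient_apply_eq {d : ℕ} (f : EuclideanSpace ℝ (Fin d) → ℝ)
    (y : EuclideanSpace ℝ (Fin d)) (i : Fin d) :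
    gradient f y i = fderiv ℝ f y (EuclideanSpace.single i (1 : ℝ)) := by
  have := InnerProductSpace.toDual_symm_apply (𝕜 := ℝ) (x := EuclideanSpace.single i (1 : ℝ))
    (y := fderiv ℝ f y)
  rw [← this, real_inner_comm, EuclideanSpace.inner_single_left]
  simp [gradient]

/-- scaling of Gaussian integrals -/
lemma lintegral_gk_scale (d : ℕ) {s : ℝ} (hs : 0 < s)
    (F : EuclideanSpace ℝ (Fin d) → ℝ≥0∞) (hF : Measurable F) :
    ∫⁻ u, F u * ENNReal.ofReal (gk ((2 * π * s ^ 2) ^ (-(d : ℝ) / 2)) s u)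
      = ∫⁻ z, F (s • z) ∂(stdGaussMeasure d) := by
  have hc : Continuous (stdGaussDensity d) := by unfold stdGaussDensity; fun_prop
  unfold stdGaussMeasure
  have hFs : Measurable fun z => F (s • z) :=
    hF.comp (by fun_prop : Measurable fun z : EuclideanSpace ℝ (Fin d) => s • z)
  rw [lintegral_withDensity_eq_lintegral_mul _ (by fun_prop) hFs]
  set G : EuclideanSpace ℝ (Fin d) → ℝ≥0∞ :=
    fun u => F u * ENNReal.ofReal (gk ((2 * π * s ^ 2) ^ (-(d : ℝ) / 2)) s u) with hG
  have hGm : Measurable G := hF.mul (gk_continuous _ _).measurable.ennreal_ofReal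
  have h1 : ∫⁻ z, G (s • z) = ENNReal.ofReal ((s ^ d)⁻¹) * ∫⁻ u, G u := by
    rw [← lintegral_map hGm (by fun_prop : Measurable fun z : EuclideanSpace ℝ (Fin d) => s • z),
      Measure.map_addHaar_smul _ hs.ne', lintegral_smul_measure, finrank_euclideanSpace_fin,
      abs_of_pos (by positivity), smul_eq_mul]
  have h2 : ∫⁻ u, G u = ENNReal.ofReal (s ^ d) * ∫⁻ z, G (s • z) := by
    rw [h1, ← mul_assoc, ← ENNReal.ofReal_mul (by positivity), mul_inv_cancel₀ (by positivity)]
    simp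
  have hGs : Measurable fun z => G (s • z) :=
    hGm.comp (by fun_prop : Measurable fun z : EuclideanSpace ℝ (Fin d) => s • z)
  rw [h2, ← lintegral_const_mul _ hGs]
  congr 1
  funext z
  simp only [hG, Pi.mul_apply]
  rw [mul_left_comm, ← ENNReal.ofReal_mul (by positivity), mul_comm]
  congr 2
  unfold gk stdGaussDensity
  rw [norm_smul, ← mul_assoc]
  congr 1
  · rw [Real.mul_rpow (by positivity) (by positivity), ← Real.rpow_natCast s 2, ← Real.rpow_mul hs.le,
      ← Real.rpow_natCast s d, mul_left_comm, ← Real.rpow_add hs]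
    have : (d : ℝ) + (2 : ℕ) * (-(d : ℝ) / 2) = 0 := by push_cast; ring
    rw [this]; simp
  · congr 1
    rw [Real.norm_of_nonneg hs.le]; field_simp

lemma stdGauss_mass (d : ℕ) : ∫⁻ _z, 1 ∂(stdGaussMeasure d) = 1 := by
  have hc : Continuous (stdGaussDensity d) := by unfold stdGaussDensity; fun_prop
  unfold stdGaussMeasure
  rw [lintegral_one, withDensity_apply _ MeasurableSet.univ, Measure.restrict_univ]
  have h := GaussianFourier.integral_rexp_neg_mul_sq_norm
    (V := EuclideanSpace ℝ (Fin d)) (b := 1 / 2) (by norm_num)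
  have hpos : 0 < ∫ v : EuclideanSpace ℝ (Fin d), Real.exp (-(1 / 2) * ‖v‖ ^ 2) := by
    rw [h]; positivity
  have hi : Integrable (fun v : EuclideanSpace ℝ (Fin d) => Real.exp (-(1 / 2) * ‖v‖ ^ 2)) := by
    by_contra hn
    rw [integral_undef hn] at hpos
    exact lt_irrefl _ hpos
  have he : stdGaussDensity d = fun v => (2 * π) ^ (-(d : ℝ) / 2) *
      Real.exp (-(1 / 2) * ‖v‖ ^ 2) := by
    funext v; unfold stdGaussDensity; congr 2; ring
  rw [← ofReal_integral_eq_lintegral_ofReal, he, integral_const_mul, h]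
  · rw [finrank_euclideanSpace_fin, show π / (1 / 2) = 2 * π by ring,
      ← Real.rpow_add (by positivity)]
    rw [show -(d : ℝ) / 2 + d / 2 = 0 by ring]; simp
  · rw [he]; exact hi.const_mul _
  · exact Filter.Eventually.of_forall fun v => by unfold stdGaussDensity; positivity

lemma weight_integrable {d : ℕ} {c s : ℝ} (hc : 0 < c) (hs : 0 < s) (m : ℝ)
    {p0 : EuclideanSpace ℝ (Fin d) → ℝ} (hp : Integrable p0) (n : ℕ)
    (g : EuclideanSpace ℝ (Fin d) → ℝ) (hg : Continuous g) (hgn : ∀ u, |g u| ≤ ‖u‖ ^ n)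
    (y : EuclideanSpace ℝ (Fin d)) :
    Integrable (fun x => g (y - m • x) * (gk c s (y - m • x) * p0 x)) := by
  obtain ⟨A, hA⟩ := gk_bound (V := EuclideanSpace ℝ (Fin d)) hc hs n
  have hcont : Continuous fun x : EuclideanSpace ℝ (Fin d) =>
      g (y - m • x) * gk c s (y - m • x) :=
    (hg.mul (gk_continuous c s)).comp (by fun_prop : Continuous fun x => y - m • x)
  have := hp.bdd_mul (c := A) hcont.aestronglyMeasurable (Filter.Eventually.of_forall fun x => by
    rw [Real.norm_eq_abs, abs_mul, abs_of_nonneg (gk_nonneg hc s _)]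
    exact (mul_le_mul_of_nonneg_right (hgn _) (gk_nonneg hc s _)).trans (hA _))
  simpa only [mul_assoc] using this

lemma conv_pos {d : ℕ} {c s : ℝ} (hc : 0 < c) (hs : 0 < s) (m : ℝ)
    {p0 : EuclideanSpace ℝ (Fin d) → ℝ} (hp : Integrable p0) (h0 : ∀ x, 0 ≤ p0 x)
    (h1 : (∫ x, p0 x) = 1) (y : EuclideanSpace ℝ (Fin d)) :
    0 < ∫ x, gk c s (y - m • x) * p0 x := by
  have hi := weight_integrable hc hs m hp 0 (fun _ => 1) continuous_const (by simp) y
  simp only [one_mul] at hi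
  have h2 : 0 < ∫ x, p0 x := by rw [h1]; exact one_pos
  rw [integral_pos_iff_support_of_nonneg h0 hp] at h2
  rw [integral_pos_iff_support_of_nonneg
    (fun x => mul_nonneg (gk_nonneg hc s _) (h0 x)) hi]
  convert h2 using 2
  ext x
  simp [(gk_pos hc s (y - m • x)).ne']

lemma coord_le {d : ℕ} (u : EuclideanSpace ℝ (Fin d)) (i : Fin d) : |u i| ≤ ‖u‖ := by
  simpa using PiLp.norm_apply_le u i

lemma hess_formula {d : ℕ} {c s : ℝ} (hc : 0 < c) (hs : 0 < s) (m : ℝ)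
    {p0 : EuclideanSpace ℝ (Fin d) → ℝ} (hp : Integrable p0) (h0 : ∀ x, 0 ≤ p0 x)
    (h1 : (∫ x, p0 x) = 1) (y : EuclideanSpace ℝ (Fin d)) (i j : Fin d) :
    hessMatrix d (fun y => Real.log (∫ x, gk c s (y - m • x) * p0 x)) y i j
      = (∫ x, ((y - m • x) i * (y - m • x) j) * (gk c s (y - m • x) * p0 x))
          / (s ^ 4 * ∫ x, gk c s (y - m • x) * p0 x)
        - (1 / s ^ 2) * (1 : Matrix (Fin d) (Fin d) ℝ) i j
        - (∫ x, (y - m • x) i * (gk c s (y - m • x) * p0 x))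
          * (∫ x, (y - m • x) j * (gk c s (y - m • x) * p0 x))
          / (s ^ 4 * (∫ x, gk c s (y - m • x) * p0 x) ^ 2) := by
  set P : EuclideanSpace ℝ (Fin d) → ℝ := fun y => ∫ x, gk c s (y - m • x) * p0 x with hP
  have Ppos : ∀ y, 0 < P y := fun y => conv_pos hc hs m hp h0 h1 y
  set kf : Fin d → EuclideanSpace ℝ (Fin d) → ℝ := fun i u => -(1 / s ^ 2) * gk c s u * u i with hkf
  set Q : Fin d → EuclideanSpace ℝ (Fin d) → ℝ :=
    fun i y => ∫ x, kf i (y - m • x) * p0 x with hQ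
  obtain ⟨A0, hA0⟩ := gk_bound (V := EuclideanSpace ℝ (Fin d)) hc hs 0
  obtain ⟨A1, hA1⟩ := gk_bound (V := EuclideanSpace ℝ (Fin d)) hc hs 1
  obtain ⟨A2, hA2⟩ := gk_bound (V := EuclideanSpace ℝ (Fin d)) hc hs 2
  have hs2 : 0 < 1 / s ^ 2 := by positivity
  have hkc := gk_continuous (V := EuclideanSpace ℝ (Fin d)) c s
  have hn1 : ∀ u : EuclideanSpace ℝ (Fin d),
      ‖(-(1 / s ^ 2) * gk c s u) • innerSL ℝ u‖ ≤ 1 / s ^ 2 * A1 := by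
    intro u
    have h := hA1 u
    rw [norm_smul, innerSL_apply_norm, Real.norm_eq_abs, abs_mul, abs_neg, abs_of_pos hs2,
      abs_of_nonneg (gk_nonneg hc s u), mul_assoc]
    apply mul_le_mul_of_nonneg_left _ hs2.le
    linarith
  have hPd : ∀ y, ∃ L : EuclideanSpace ℝ (Fin d) →L[ℝ] ℝ, HasFDerivAt P L y ∧
      ∀ i, L (EuclideanSpace.single i 1) = Q i y := by
    intro y
    obtain ⟨L, hL, hLv⟩ := conv_hasFDerivAt m hp (gk c s) _ (gk_hasFDerivAt c s)
      (by fun_prop) (A := A0) (B := 1 / s ^ 2 * A1)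
      (fun u => by have := hA0 u; rw [abs_of_nonneg (gk_nonneg hc s u)]; simpa using this) hn1 y
    refine ⟨L, hL, fun i => ?_⟩
    rw [hLv]
    simp only [hQ, hkf, smul_apply, innerSL_apply_apply, smul_eq_mul]
    congr 1; funext x
    rw [real_inner_comm, EuclideanSpace.inner_single_left]; simp
  have hQd : ∀ i y, ∃ L : EuclideanSpace ℝ (Fin d) →L[ℝ] ℝ, HasFDerivAt (Q i) L y ∧
      ∀ j, L (EuclideanSpace.single j 1)
        = ∫ x, ((-(1 / s ^ 2) * gk c s (y - m • x)) * (1 : Matrix (Fin d) (Fin d) ℝ) i j +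
          (1 / s ^ 4) * gk c s (y - m • x) * ((y - m • x) i * (y - m • x) j)) * p0 x := by
    intro i y
    have hd : ∀ u, HasFDerivAt (kf i)
        ((-(1 / s ^ 2) * gk c s u) • (EuclideanSpace.proj i : EuclideanSpace ℝ (Fin d) →L[ℝ] ℝ) +
          u i • (-(1 / s ^ 2)) • ((-(1 / s ^ 2) * gk c s u) • innerSL ℝ u)) u := by
      intro u
      have e1 := ((gk_hasFDerivAt c s u).const_mul (-(1 / s ^ 2)))
      have e2 : HasFDerivAt (fun u : EuclideanSpace ℝ (Fin d) => u i)
        (EuclideanSpace.proj i : EuclideanSpace ℝ (Fin d) →L[ℝ] ℝ) u :=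
        (EuclideanSpace.proj i : EuclideanSpace ℝ (Fin d) →L[ℝ] ℝ).hasFDerivAt
      exact e1.mul e2
    have hpr : ‖(EuclideanSpace.proj i : EuclideanSpace ℝ (Fin d) →L[ℝ] ℝ)‖ ≤ 1 :=
      ContinuousLinearMap.opNorm_le_bound _ zero_le_one fun u => by
        simpa using coord_le u i
    obtain ⟨L, hL, hLv⟩ := conv_hasFDerivAt m hp (kf i) _ hd
      (by fun_prop) (A := 1 / s ^ 2 * A1) (B := 1 / s ^ 2 * A0 + 1 / s ^ 2 * (1 / s ^ 2 * A2))
      (fun u => by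
        have h := hA1 u
        have hk := gk_nonneg hc s u
        simp only [hkf]
        rw [abs_mul, abs_mul, abs_neg, abs_of_pos hs2, abs_of_nonneg hk, mul_assoc]
        apply mul_le_mul_of_nonneg_left _ hs2.le
        nlinarith [coord_le u i])
      (fun u => by
        have h := hA2 u
        have h' := hA0 u
        have hk := gk_nonneg hc s u
        refine (norm_add_le _ _).trans (add_le_add ?_ ?_)
        · rw [norm_smul, Real.norm_eq_abs, abs_mul, abs_neg, abs_of_pos hs2, abs_of_nonneg hk,
            mul_assoc]
          apply mul_le_mul_of_nonneg_left _ hs2.le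
          nlinarith
        · rw [norm_smul, norm_smul, norm_smul, innerSL_apply_norm, Real.norm_eq_abs,
            Real.norm_eq_abs, Real.norm_eq_abs, abs_mul, abs_neg, abs_of_pos hs2,
            abs_of_nonneg hk, mul_left_comm]
          apply mul_le_mul_of_nonneg_left _ hs2.le
          rw [mul_assoc, mul_left_comm]
          apply mul_le_mul_of_nonneg_left _ hs2.le
          calc |u i| * (gk c s u * ‖u‖) ≤ ‖u‖ * (gk c s u * ‖u‖) :=
                mul_le_mul_of_nonneg_right (coord_le u i) (by positivity)
            _ ≤ A2 := by linarith) y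
    refine ⟨L, hL, fun j => ?_⟩
    rw [hLv]
    congr 1; funext x
    simp only [add_apply, smul_apply, innerSL_apply_apply,
      smul_eq_mul]
    rw [real_inner_comm, EuclideanSpace.inner_single_left]
    simp [Matrix.one_apply]
    left
    field_simp
  have hg : (fun y => gradient (fun y => Real.log (P y)) y i) = fun y => Q i y * (P y)⁻¹ := by
    funext y
    obtain ⟨L, hL, hLi⟩ := hPd y
    rw [gradient_apply_eq, (hL.log (Ppos y).ne').fderiv]
    simp [hLi, mul_comm]
  obtain ⟨L, hL, hLi⟩ := hPd y
  obtain ⟨L2, hL2, hL2i⟩ := hQd i y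
  have hinv := (hasDerivAt_inv (Ppos y).ne').comp_hasFDerivAt y hL
  have hmul := hL2.mul hinv
  unfold hessMatrix
  rw [hg]
  have hfd : fderiv ℝ (fun y => Q i y * (P y)⁻¹) y = _ := hmul.fderiv
  rw [hfd]
  have hQM : ∀ i, Q i y = -(1 / s ^ 2) * ∫ x, (y - m • x) i * (gk c s (y - m • x) * p0 x) := by
    intro i
    simp only [hQ, hkf]
    rw [← integral_const_mul]
    congr 1; funext x; ring
  have hwi := weight_integrable hc hs m hp 0 (fun _ => 1) continuous_const (by simp) y
  simp only [one_mul] at hwi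
  have hij := weight_integrable hc hs m hp 2 (fun u => u i * u j) (by fun_prop)
    (fun u => by rw [abs_mul, sq]; exact mul_le_mul (coord_le u i) (coord_le u j) (abs_nonneg _) (norm_nonneg _)) y
  have hR : (∫ x, ((-(1 / s ^ 2) * gk c s (y - m • x)) * (1 : Matrix (Fin d) (Fin d) ℝ) i j +
          (1 / s ^ 4) * gk c s (y - m • x) * ((y - m • x) i * (y - m • x) j)) * p0 x)
      = -(1 / s ^ 2) * (1 : Matrix (Fin d) (Fin d) ℝ) i j * P y + (1 / s ^ 4) *
        ∫ x, ((y - m • x) i * (y - m • x) j) * (gk c s (y - m • x) * p0 x) := by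
    rw [hP, ← integral_const_mul, ← integral_const_mul,
      ← integral_add (hwi.const_mul _) (hij.const_mul _)]
    congr 1; funext x; ring
  have hP1 := (Ppos y).ne'
  simp only [add_apply, smul_apply, smul_eq_mul, hLi, hL2i,
    hQM, hR, Function.comp]
  have hPy : (∫ x, gk c s (y - m • x) * p0 x) = P y := rfl
  rw [hPy]
  field_simp
  ring

lemma frob_bound {d : ℕ} {s a p S2 S4 S8 : ℝ} (hs : 0 < s) (hp : 0 < p)
    (hS2 : 0 ≤ S2) (hS4 : 0 ≤ S4)
    (A B : Matrix (Fin d) (Fin d) ℝ) (M : Fin d → ℝ)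
    (hA : ∑ i, ∑ j, A i j ^ 2 ≤ p * S4) (hM : ∑ i, M i ^ 2 ≤ p * S2)
    (h2 : S2 ^ 2 ≤ p * S4) (h4 : S4 ^ 2 ≤ p * S8) (ha : a ^ 2 ≤ 1 / s ^ 4)
    (hB : ∀ i j, B i j = A i j / (s ^ 4 * p) - M i * M j / (s ^ 4 * p ^ 2)
      + a * (1 : Matrix (Fin d) (Fin d) ℝ) i j) :
    frobNorm d B ^ 4 * p ≤ 72 / s ^ 16 * S8 + 18 / s ^ 8 * d ^ 2 * p := by
  have hone : ∑ i : Fin d, ∑ j, ((1 : Matrix (Fin d) (Fin d) ℝ) i j) ^ 2 = d := by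
    simp [Matrix.one_apply]
  have hMM : ∑ i, ∑ j, (M i * M j) ^ 2 ≤ p ^ 3 * S4 := by
    have : ∑ i, ∑ j, (M i * M j) ^ 2 = (∑ i, M i ^ 2) ^ 2 := by
      rw [sq (∑ i, M i ^ 2), Finset.sum_mul_sum]; simp only [mul_pow]
    rw [this]
    have h0 : 0 ≤ ∑ i, M i ^ 2 := Finset.sum_nonneg fun i _ => sq_nonneg _
    calc (∑ i, M i ^ 2) ^ 2 ≤ (p * S2) ^ 2 := by gcongr
      _ = p ^ 2 * S2 ^ 2 := by ring
      _ ≤ p ^ 2 * (p * S4) := by gcongr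
      _ = _ := by ring
  have hsum : ∑ i, ∑ j, B i j ^ 2 ≤ 6 * S4 / (s ^ 8 * p) + 3 * (1 / s ^ 4) * d := by
    calc ∑ i, ∑ j, B i j ^ 2
        ≤ ∑ i, ∑ j, (3 / (s ^ 8 * p ^ 2) * A i j ^ 2 + 3 / (s ^ 8 * p ^ 4) * (M i * M j) ^ 2
            + 3 * a ^ 2 * ((1 : Matrix (Fin d) (Fin d) ℝ) i j) ^ 2) := by
          refine Finset.sum_le_sum fun i _ => Finset.sum_le_sum fun j _ => ?_
          rw [hB]
          have e1 : 3 / (s ^ 8 * p ^ 2) * A i j ^ 2 = 3 * (A i j / (s ^ 4 * p)) ^ 2 := by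
            field_simp
          have e2 : 3 / (s ^ 8 * p ^ 4) * (M i * M j) ^ 2
              = 3 * (M i * M j / (s ^ 4 * p ^ 2)) ^ 2 := by
            field_simp
          rw [e1, e2]
          generalize A i j / (s ^ 4 * p) = x
          generalize M i * M j / (s ^ 4 * p ^ 2) = y
          generalize (1 : Matrix (Fin d) (Fin d) ℝ) i j = z
          nlinarith [sq_nonneg (x + y), sq_nonneg (x - a * z), sq_nonneg (y + a * z)]
      _ = 3 / (s ^ 8 * p ^ 2) * (∑ i, ∑ j, A i j ^ 2)
            + 3 / (s ^ 8 * p ^ 4) * (∑ i, ∑ j, (M i * M j) ^ 2) + 3 * a ^ 2 * d := by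
          rw [← hone]
          simp only [Finset.sum_add_distrib, Finset.mul_sum]
      _ ≤ 3 / (s ^ 8 * p ^ 2) * (p * S4) + 3 / (s ^ 8 * p ^ 4) * (p ^ 3 * S4)
            + 3 * (1 / s ^ 4) * d := by gcongr
      _ = _ := by field_simp; ring
  have h0 : 0 ≤ ∑ i, ∑ j, B i j ^ 2 :=
    Finset.sum_nonneg fun i _ => Finset.sum_nonneg fun j _ => sq_nonneg _
  have hf : frobNorm d B ^ 4 = (∑ i, ∑ j, B i j ^ 2) ^ 2 := by
    unfold frobNorm
    rw [show (4 : ℕ) = 2 * 2 from rfl, pow_mul, Real.sq_sqrt h0]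
  rw [hf]
  calc (∑ i, ∑ j, B i j ^ 2) ^ 2 * p
      ≤ (6 * S4 / (s ^ 8 * p) + 3 * (1 / s ^ 4) * d) ^ 2 * p := by gcongr
    _ ≤ (2 * (6 * S4 / (s ^ 8 * p)) ^ 2 + 2 * (3 * (1 / s ^ 4) * d) ^ 2) * p := by
        gcongr
        nlinarith [sq_nonneg (6 * S4 / (s ^ 8 * p) - 3 * (1 / s ^ 4) * d)]
    _ = 72 / (s ^ 16 * p) * S4 ^ 2 + 18 / s ^ 8 * d ^ 2 * p := by field_simp; ring
    _ ≤ 72 / (s ^ 16 * p) * (p * S8) + 18 / s ^ 8 * d ^ 2 * p := by gcongr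
    _ = _ := by field_simp

lemma pointwise_bound {d : ℕ} {c s σ : ℝ} (hc : 0 < c) (hs : 0 < s) (hsσ : s ≤ σ) (m : ℝ)
    {p0 : EuclideanSpace ℝ (Fin d) → ℝ} (hp : Integrable p0) (h0 : ∀ x, 0 ≤ p0 x)
    (h1 : (∫ x, p0 x) = 1) (y : EuclideanSpace ℝ (Fin d)) :
    frobNorm d (hessMatrix d (fun y => Real.log (∫ x, gk c s (y - m • x) * p0 x)) y
      + (1 / σ ^ 2) • (1 : Matrix (Fin d) (Fin d) ℝ)) ^ 4 * (∫ x, gk c s (y - m • x) * p0 x)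
    ≤ 72 / s ^ 16 * (∫ x, ‖y - m • x‖ ^ 8 * (gk c s (y - m • x) * p0 x))
      + 18 / s ^ 8 * d ^ 2 * (∫ x, gk c s (y - m • x) * p0 x) := by
  have hσ : 0 < σ := hs.trans_le hsσ
  have hw : ∀ x, 0 ≤ gk c s (y - m • x) * p0 x := fun x => mul_nonneg (gk_nonneg hc s _) (h0 x)
  have hI := weight_integrable hc hs m hp
  have hwi := hI 0 (fun _ => 1) continuous_const (by simp) y
  simp only [one_mul] at hwi
  have hpos := conv_pos hc hs m hp h0 h1 y
  have hnorm : ∀ n, Integrable (fun x => ‖y - m • x‖ ^ n * (gk c s (y - m • x) * p0 x)) :=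
    fun n => hI n (fun u => ‖u‖ ^ n) (by fun_prop)
      (fun u => by rw [abs_of_nonneg (by positivity)]) y
  have b1 : ∀ i (u : EuclideanSpace ℝ (Fin d)), |u i| ≤ ‖u‖ ^ 1 := fun i u => by
    simpa using coord_le u i
  have b2 : ∀ i (u : EuclideanSpace ℝ (Fin d)), |u i ^ 2| ≤ ‖u‖ ^ 2 := fun i u => by
    rw [abs_pow]; exact pow_le_pow_left₀ (abs_nonneg _) (coord_le u i) 2
  have b11 : ∀ i j (u : EuclideanSpace ℝ (Fin d)), |u i * u j| ≤ ‖u‖ ^ 2 := fun i j u => by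
    rw [abs_mul, sq]
    exact mul_le_mul (coord_le u i) (coord_le u j) (abs_nonneg _) (norm_nonneg _)
  have b22 : ∀ i j (u : EuclideanSpace ℝ (Fin d)), |(u i * u j) ^ 2| ≤ ‖u‖ ^ 4 := fun i j u => by
    rw [abs_pow, show (4 : ℕ) = 2 * 2 from rfl, pow_mul]
    exact pow_le_pow_left₀ (abs_nonneg _) (b11 i j u) 2
  have i1 := fun i => hI 1 (fun u => u i) (by fun_prop) (b1 i) y
  have i2 := fun i => hI 2 (fun u => u i ^ 2) (by fun_prop) (b2 i) y
  have i11 := fun i j => hI 2 (fun u => u i * u j) (by fun_prop) (b11 i j) y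
  have i22 := fun i j => hI 4 (fun u => (u i * u j) ^ 2) (by fun_prop) (b22 i j) y
  have hns : ∀ u : EuclideanSpace ℝ (Fin d), ‖u‖ ^ 2 = ∑ i, u i ^ 2 := fun u => by
    rw [EuclideanSpace.norm_sq_eq]; simp
  refine frob_bound (a := 1 / σ ^ 2 - 1 / s ^ 2)
    (S2 := ∫ x, ‖y - m • x‖ ^ 2 * (gk c s (y - m • x) * p0 x))
    (S4 := ∫ x, ‖y - m • x‖ ^ 4 * (gk c s (y - m • x) * p0 x)) hs hpos
    (integral_nonneg fun x => mul_nonneg (by positivity) (hw x))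
    (integral_nonneg fun x => mul_nonneg (by positivity) (hw x))
    (fun i j => ∫ x, ((y - m • x) i * (y - m • x) j) * (gk c s (y - m • x) * p0 x)) _
    (fun i => ∫ x, (y - m • x) i * (gk c s (y - m • x) * p0 x)) ?_ ?_ ?_ ?_ ?_ ?_
  · calc _ ≤ ∑ i : Fin d, ∑ j : Fin d, (∫ x, gk c s (y - m • x) * p0 x) *
            ∫ x, ((y - m • x) i * (y - m • x) j) ^ 2 * (gk c s (y - m • x) * p0 x) :=
          Finset.sum_le_sum fun i _ => Finset.sum_le_sum fun j _ =>
            cs_integral hw hwi (i11 i j) (i22 i j) hpos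
      _ = _ := by
          simp only [← Finset.mul_sum]
          congr 1
          simp_rw [← integral_finsetSum Finset.univ (fun j _ => i22 _ j)]
          rw [← integral_finsetSum]
          · congr 1; funext x
            rw [show (4 : ℕ) = 2 * 2 from rfl, pow_mul, hns, sq (∑ i, (y - m • x) i ^ 2),
              Finset.sum_mul_sum]
            simp only [← Finset.sum_mul, mul_pow]
          · exact fun i _ => integrable_finsetSum _ fun j _ => i22 i j
  · calc _ ≤ ∑ i : Fin d, (∫ x, gk c s (y - m • x) * p0 x) *
            ∫ x, (y - m • x) i ^ 2 * (gk c s (y - m • x) * p0 x) :=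
          Finset.sum_le_sum fun i _ => cs_integral hw hwi (i1 i) (i2 i) hpos
      _ = _ := by
          simp only [← Finset.mul_sum]
          congr 1
          rw [← integral_finsetSum Finset.univ (fun j _ => i2 j)]
          congr 1; funext x
          rw [hns, Finset.sum_mul]
  · have h := cs_integral hw hwi (hnorm 2) (by simpa only [← pow_mul] using hnorm 4) hpos
    simpa only [← pow_mul] using h
  · have h := cs_integral hw hwi (hnorm 4) (by simpa only [← pow_mul] using hnorm 8) hpos
    simpa only [← pow_mul] using h
  · have e1 : 1 / σ ^ 2 ≤ 1 / s ^ 2 := by gcongr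
    have e2 : 0 < 1 / σ ^ 2 := by positivity
    have e3 : 1 / s ^ 4 = (1 / s ^ 2) ^ 2 := by field_simp
    rw [e3]
    apply sq_le_sq'
    · linarith
    · linarith
  · intro i j
    rw [Matrix.add_apply, Matrix.smul_apply, hess_formula hc hs m hp h0 h1 y i j, smul_eq_mul]
    ring

lemma lintegral_conv {d : ℕ} {c s : ℝ} (hc : 0 < c) (hs : 0 < s) (m : ℝ) (n : ℕ)
    {p0 : EuclideanSpace ℝ (Fin d) → ℝ} (hm : Measurable p0) (hp : Integrable p0)
    (h0 : ∀ x, 0 ≤ p0 x) (h1 : (∫ x, p0 x) = 1) :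
    ∫⁻ y, ENNReal.ofReal (∫ x, ‖y - m • x‖ ^ n * (gk c s (y - m • x) * p0 x))
      = ∫⁻ u : EuclideanSpace ℝ (Fin d),
        ENNReal.ofReal (‖u‖ ^ n) * ENNReal.ofReal (gk c s u) := by
  have hkc := (gk_continuous (V := EuclideanSpace ℝ (Fin d)) c s).measurable
  have e1 : ∀ y : EuclideanSpace ℝ (Fin d),
      ENNReal.ofReal (∫ x, ‖y - m • x‖ ^ n * (gk c s (y - m • x) * p0 x))
      = ∫⁻ x, ENNReal.ofReal (‖y - m • x‖ ^ n) * ENNReal.ofReal (gk c s (y - m • x))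
          * ENNReal.ofReal (p0 x) := by
    intro y
    rw [ofReal_integral_eq_lintegral_ofReal
      (weight_integrable hc hs m hp n (fun u => ‖u‖ ^ n) (by fun_prop)
        (fun u => by rw [abs_of_nonneg (by positivity)]) y)
      (Filter.Eventually.of_forall fun x =>
        mul_nonneg (by positivity) (mul_nonneg (gk_nonneg hc s _) (h0 x)))]
    congr 1; funext x
    rw [ENNReal.ofReal_mul (by positivity), ENNReal.ofReal_mul (gk_nonneg hc s _), mul_assoc]
  simp_rw [e1]
  rw [lintegral_lintegral_swap (by unfold Function.uncurry; fun_prop)]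
  have e2 : ∀ x : EuclideanSpace ℝ (Fin d),
      ∫⁻ y, ENNReal.ofReal (‖y - m • x‖ ^ n) * ENNReal.ofReal (gk c s (y - m • x))
          * ENNReal.ofReal (p0 x)
      = (∫⁻ u : EuclideanSpace ℝ (Fin d),
        ENNReal.ofReal (‖u‖ ^ n) * ENNReal.ofReal (gk c s u)) * ENNReal.ofReal (p0 x) := by
    intro x
    rw [lintegral_mul_const _ (by fun_prop)]
    congr 1
    exact lintegral_sub_right_eq_self
      (fun u : EuclideanSpace ℝ (Fin d) => ENNReal.ofReal (‖u‖ ^ n) * ENNReal.ofReal (gk c s u)) _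
  simp_rw [e2]
  rw [lintegral_const_mul _ (by fun_prop), ← ofReal_integral_eq_lintegral_ofReal hp
    (Filter.Eventually.of_forall h0), h1]
  simp

/-- a universal fourth-moment bound for the Frobenius norm of the modified
Hessian `∇² log p_t + σ⁻² I_d`:
`∫ ‖∇² log p_t + σ⁻²I‖_Fr⁴ p_t ≤ C (σ_t⁻⁸ + σ⁻⁸)(∫‖z‖⁸ dγ_d + d⁴)`. -/
theorem hessian_fourth_moment_bound :
    ∃ C : ℝ, 0 < C ∧
      ∀ (d : ℕ), 1 ≤ d → ∀ (σ T : ℝ), 0 < σ → 0 < T →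
        ∀ β : ℝ → ℝ, ContinuousOn β (Icc 0 T) → (∀ s ∈ Icc (0:ℝ) T, 0 < β s) →
          MonotoneOn β (Icc 0 T) →
        ∀ t ∈ Ioc (0:ℝ) T,
        ∀ p0 : EuclideanSpace ℝ (Fin d) → ℝ, Measurable p0 → (∀ x, 0 ≤ p0 x) →
          Integrable p0 → (∫ x, p0 x) = 1 →
          ∫⁻ x, ENNReal.ofReal
              (frobNorm d
                  (hessMatrix d (fun y => Real.log (forwardDensity d (σ ^ 2) β p0 t y)) x +
                    (1 / σ ^ 2) • (1 : Matrix (Fin d) (Fin d) ℝ)) ^ 4 *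
                forwardDensity d (σ ^ 2) β p0 t x) ≤
            ENNReal.ofReal C *
              ENNReal.ofReal (1 / scoef (σ ^ 2) β t ^ 8 + 1 / σ ^ 8) *
                ((∫⁻ z, ENNReal.ofReal (‖z‖ ^ 8) ∂(stdGaussMeasure d)) + (d : ℝ≥0∞) ^ 4) := by
  refine ⟨72, by norm_num, ?_⟩
  intro d hd σ T hσ hT β hβc hβpos _ t ht p0 hm h0 hp h1
  set s := scoef (σ ^ 2) β t with hsdef
  set m := mcoef (σ ^ 2) β t with hmdef
  have hint : 0 < ∫ u in (0:ℝ)..t, β u := by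
    apply intervalIntegral.intervalIntegral_pos_of_pos_on
    · apply ContinuousOn.intervalIntegrable
      rw [uIcc_of_le ht.1.le]
      exact hβc.mono (Icc_subset_Icc le_rfl ht.2)
    · exact fun x hx => hβpos x ⟨hx.1.le, hx.2.le.trans ht.2⟩
    · exact ht.1
  have hm0 : 0 < m := Real.exp_pos _
  have hm1 : m < 1 := by
    rw [hmdef, mcoef, Real.exp_lt_one_iff]
    have : 0 < 1 / (2 * σ ^ 2) := by positivity
    nlinarith
  have hs : 0 < s := by
    rw [hsdef, scoef, ← hmdef]
    apply Real.sqrt_pos.2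
    apply mul_pos (by positivity)
    nlinarith
  have hsσ : s ≤ σ := by
    rw [hsdef, scoef, ← hmdef]
    apply Real.sqrt_le_iff.2 ⟨hσ.le, ?_⟩
    nlinarith [sq_nonneg (σ * m)]
  set c : ℝ := (2 * π * s ^ 2) ^ (-(d : ℝ) / 2) with hcdef
  have hc : 0 < c := by positivity
  have hfd : forwardDensity d (σ ^ 2) β p0 t = fun y => ∫ x, gk c s (y - m • x) * p0 x := rfl
  rw [hfd]
  have hPm : ∀ n : ℕ, ∫⁻ y, ENNReal.ofReal (∫ x, ‖y - m • x‖ ^ n * (gk c s (y - m • x) * p0 x))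
      = ENNReal.ofReal (s ^ n) * ∫⁻ z, ENNReal.ofReal (‖z‖ ^ n) ∂(stdGaussMeasure d) := by
    intro n
    rw [lintegral_conv hc hs m n hm hp h0 h1,
      lintegral_gk_scale d hs (fun u => ENNReal.ofReal (‖u‖ ^ n)) (by fun_prop),
      ← lintegral_const_mul _ (by fun_prop)]
    congr 1; funext z
    rw [← ENNReal.ofReal_mul (by positivity), norm_smul, mul_pow, Real.norm_of_nonneg hs.le]
  have hP8 := hPm 8
  have hP0 := hPm 0
  simp only [pow_zero, one_mul, ENNReal.ofReal_one, stdGauss_mass] at hP0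
  have hmeas : Measurable fun y => ENNReal.ofReal (∫ x, gk c s (y - m • x) * p0 x) := by
    have hkc := (gk_continuous (V := EuclideanSpace ℝ (Fin d)) c s).measurable
    apply Measurable.ennreal_ofReal
    have hu : StronglyMeasurable (Function.uncurry
        fun (y x : EuclideanSpace ℝ (Fin d)) => gk c s (y - m • x) * p0 x) := by
      apply Measurable.stronglyMeasurable
      unfold Function.uncurry; fun_prop
    exact hu.integral_prod_right.measurable
  set I8 := ∫⁻ z, ENNReal.ofReal (‖z‖ ^ 8) ∂(stdGaussMeasure d) with hI8
  have hfirst : ∀ y, 0 ≤ ∫ x, ‖y - m • x‖ ^ 8 * (gk c s (y - m • x) * p0 x) := fun y =>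
    integral_nonneg fun x => mul_nonneg (by positivity) (mul_nonneg (gk_nonneg hc s _) (h0 x))
  have hd1 : (1 : ℝ) ≤ d := by exact_mod_cast hd
  calc _ ≤ ∫⁻ y, (ENNReal.ofReal (72 / s ^ 16) *
          ENNReal.ofReal (∫ x, ‖y - m • x‖ ^ 8 * (gk c s (y - m • x) * p0 x))
          + ENNReal.ofReal (18 / s ^ 8 * d ^ 2) *
            ENNReal.ofReal (∫ x, gk c s (y - m • x) * p0 x)) := by
        refine lintegral_mono fun y => ?_
        rw [← ENNReal.ofReal_mul (by positivity), ← ENNReal.ofReal_mul (by positivity),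
          ← ENNReal.ofReal_add (mul_nonneg (by positivity) (hfirst y))
            (mul_nonneg (by positivity) (conv_pos hc hs m hp h0 h1 y).le)]
        exact ENNReal.ofReal_le_ofReal (pointwise_bound hc hs hsσ m hp h0 h1 y)
    _ = ENNReal.ofReal (72 / s ^ 16) * (ENNReal.ofReal (s ^ 8) * I8)
          + ENNReal.ofReal (18 / s ^ 8 * d ^ 2) := by
        rw [lintegral_add_right _ (hmeas.const_mul _), lintegral_const_mul _ hmeas, hP0, mul_one,
          lintegral_const_mul' _ _ ENNReal.ofReal_ne_top, hP8]
    _ ≤ ENNReal.ofReal 72 * ENNReal.ofReal (1 / s ^ 8 + 1 / σ ^ 8) * I8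
          + ENNReal.ofReal 72 * ENNReal.ofReal (1 / s ^ 8 + 1 / σ ^ 8) * (d : ℝ≥0∞) ^ 4 := by
        have hσ8 : 0 < 1 / σ ^ 8 := by positivity
        have hs8 : 0 < 1 / s ^ 8 := by positivity
        apply add_le_add
        · rw [← mul_assoc, ← ENNReal.ofReal_mul (by positivity), ← ENNReal.ofReal_mul (by positivity)]
          refine mul_le_mul_left (ENNReal.ofReal_le_ofReal ?_) I8
          have : 72 / s ^ 16 * s ^ 8 = 72 * (1 / s ^ 8) := by field_simp
          rw [this]; linarith
        · rw [← ENNReal.ofReal_natCast d, ← ENNReal.ofReal_pow (by positivity),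
            ← ENNReal.ofReal_mul (by positivity), ← ENNReal.ofReal_mul (by positivity)]
          apply ENNReal.ofReal_le_ofReal
          have hdd : (d : ℝ) ^ 2 ≤ (d : ℝ) ^ 4 := pow_le_pow_right₀ hd1 (by norm_num)
          apply mul_le_mul _ hdd (by positivity) (by positivity)
          have : 18 / s ^ 8 = 18 * (1 / s ^ 8) := by ring
          rw [this]; linarith
    _ = _ := by rw [mul_add]
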